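/- (Ramanujan's ₁ψ₁ summation formula.) Let q, a, b, x ∈ ℂ with 0 < |q| < 1 and |b/a| < |x| < 1, and assume a ≠ 0, x ≠ 0, and that neither a nor b equals q^m for any integer m. Then the bilateral series converges absolutely and ∑_{n=−∞}^{∞} [(a;q)_n / (b;q)_n] · x^n = (q;q)_∞ (b/a;q)_∞ (ax;q)_∞ (q/(ax);q)_∞ / ((b;q)_∞ (q/a;q)_∞ (x;q)_∞ (b/(ax);q)_∞). -/

import Mathlib

/-- The finite q-Pochhammer symbol `(a;q)_k = ∏_{i=0}^{k-1} (1 - a qⁱ)`. -/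
noncomputable def qPoch (a q : ℂ) (k : ℕ) : ℂ :=
  ∏ i ∈ Finset.range k, (1 - a * q ^ i)

/-- The infinite q-Pochhammer symbol `(a;q)_∞ = ∏_{i=0}^{∞} (1 - a qⁱ)`. -/
noncomputable def qPochInf (a q : ℂ) : ℂ :=
  ∏' i : ℕ, (1 - a * q ^ i)

/-- The q-Pochhammer symbol extended to an arbitrary integer index:
`(a;q)_k = (a;q)_∞ / (a q^k;q)_∞`. -/
noncomputable def qPochInt (a q : ℂ) (k : ℤ) : ℂ :=
  qPochInf a q / qPochInf (a * q ^ k) q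

/-!
Write `ψ(a, b, x) = ∑ₙ (b qⁿ;q)_∞ / (a qⁿ;q)_∞ xⁿ`, which is the bilateral series up to the factor
`(a;q)_∞ / (b;q)_∞`. Comparing consecutive terms gives
`(1 - b/(a x)) ψ(a, b, x) = (1 - b/a) ψ(a, b q, x)`, and iterating towards `b q^N → 0` gives
`(b/(a x);q)_∞ ψ(a, b, x) = (b/a;q)_∞ ψ(a, 0, x)`. So it is enough to evaluate the sum for a single
value of `b`. At `b = q` the terms of negative index vanish and the `q`-binomial theorem applies,
but convergence there needs `|q| < |a x|`. This restriction is removed by shifting the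
summation index, which trades `a` for `a q`, against the quasi-periodicity of the theta function
`(z;q)_∞ (q/z;q)_∞`.
-/

open Filter Topology

lemma summable_prod_range_of_tendsto {u : ℕ → ℝ} {l : ℝ} (hu : Tendsto u atTop (𝓝 l))
    (hl : |l| < 1) : Summable fun n => ∏ j ∈ Finset.range n, u j := by
  obtain ⟨r, hlr, hr⟩ := exists_between hl
  refine summable_of_ratio_norm_eventually_le hr ?_
  filter_upwards [hu.abs.eventually_le_const hlr] with n hn
  rw [Finset.prod_range_succ, norm_mul, mul_comm]
  exact mul_le_mul_of_nonneg_right hn (norm_nonneg _)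

section QPochhammer

variable {q z : ℂ}

lemma qPoch_succ (z q : ℂ) (k : ℕ) : qPoch z q (k + 1) = qPoch z q k * (1 - z * q ^ k) :=
  Finset.prod_range_succ _ _

lemma qPoch_ne_zero (hz : ∀ i : ℕ, z * q ^ i ≠ 1) (k : ℕ) : qPoch z q k ≠ 0 :=
  Finset.prod_ne_zero_iff.mpr fun i _ => sub_ne_zero.mpr (hz i).symm

lemma summable_norm_mul_pow (hq : ‖q‖ < 1) (z : ℂ) : Summable fun i : ℕ => ‖-(z * q ^ i)‖ := by
  simpa only [norm_neg, norm_mul, norm_pow] using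
    (summable_geometric_of_lt_one (norm_nonneg q) hq).mul_left ‖z‖

lemma multipliable_one_sub_mul_pow (hq : ‖q‖ < 1) (z : ℂ) :
    Multipliable fun i : ℕ => 1 - z * q ^ i := by
  simpa only [sub_eq_add_neg] using multipliable_one_add_of_summable (summable_norm_mul_pow hq z)

lemma tendsto_qPoch (hq : ‖q‖ < 1) (z : ℂ) :
    Tendsto (qPoch z q) atTop (𝓝 (qPochInf z q)) :=
  (multipliable_one_sub_mul_pow hq z).hasProd.tendsto_prod_nat

lemma qPochInf_ne_zero (hq : ‖q‖ < 1) (hz : ∀ i : ℕ, z * q ^ i ≠ 1) : qPochInf z q ≠ 0 := by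
  simpa only [qPochInf, sub_eq_add_neg] using
    tprod_one_add_ne_zero_of_summable (f := fun i : ℕ => -(z * q ^ i))
      (fun i => by simpa only [← sub_eq_add_neg] using sub_ne_zero.mpr (hz i).symm)
      (summable_norm_mul_pow hq z)

lemma norm_mul_pow_le (hq : ‖q‖ ≤ 1) (z : ℂ) (i : ℕ) : ‖z * q ^ i‖ ≤ ‖z‖ := by
  rw [norm_mul, norm_pow]
  exact mul_le_of_le_one_right (norm_nonneg z) (pow_le_one₀ (norm_nonneg q) hq)

lemma mul_pow_ne_one (hq : ‖q‖ ≤ 1) (hz : ‖z‖ < 1) (i : ℕ) : z * q ^ i ≠ 1 := fun h =>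
  ((norm_mul_pow_le hq z i).trans_lt hz).ne (by rw [h, norm_one])

lemma qPochInf_ne_zero_of_norm_lt_one (hq : ‖q‖ < 1) (hz : ‖z‖ < 1) : qPochInf z q ≠ 0 :=
  qPochInf_ne_zero hq (mul_pow_ne_one hq.le hz)

lemma qPochInf_zero_left (q : ℂ) : qPochInf 0 q = 1 := by
  simp only [qPochInf, zero_mul, sub_zero, tprod_one]

lemma qPochInf_eq_qPoch_mul (hq : ‖q‖ < 1) (z : ℂ) (k : ℕ) :
    qPochInf z q = qPoch z q k * qPochInf (z * q ^ k) q := by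
  have hshift : ∀ i : ℕ, 1 - z * q ^ (i + k) = 1 - z * q ^ k * q ^ i := fun i => by ring
  have htail : Multipliable fun i : ℕ => 1 - z * q ^ (i + k) :=
    (multipliable_one_sub_mul_pow hq (z * q ^ k)).congr fun i => (hshift i).symm
  have hsplit := htail.prod_mul_tprod_nat_mul' (f := fun i => 1 - z * q ^ i)
  rw [tprod_congr hshift] at hsplit
  exact hsplit.symm

lemma qPochInf_eq_one_sub_mul (hq : ‖q‖ < 1) (z : ℂ) :
    qPochInf z q = (1 - z) * qPochInf (z * q) q := by
  simpa [qPoch] using qPochInf_eq_qPoch_mul hq z 1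

lemma continuous_qPochInf (hq : ‖q‖ < 1) : Continuous fun z => qPochInf z q := by
  refine continuous_iff_continuousAt.mpr fun z₀ => ?_
  simp only [ContinuousAt, qPochInf, sub_eq_add_neg]
  refine tendsto_tprod_one_add_of_dominated_convergence
    ((summable_geometric_of_lt_one (norm_nonneg q) hq).mul_left (‖z₀‖ + 1))
    (fun i => (by fun_prop : Continuous fun z : ℂ => -(z * q ^ i)).tendsto z₀) ?_
  filter_upwards [continuous_norm.continuousAt.eventually_le_const (lt_add_one ‖z₀‖)] with z hz i
  rw [norm_neg, norm_mul, norm_pow]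
  gcongr

lemma tendsto_mul_pow_zero (hq : ‖q‖ < 1) (z : ℂ) :
    Tendsto (fun n : ℕ => z * q ^ n) atTop (𝓝 0) := by
  simpa using (tendsto_pow_atTop_nhds_zero_of_norm_lt_one hq).const_mul z

lemma tendsto_qPochInf_mul_pow (hq : ‖q‖ < 1) (z : ℂ) :
    Tendsto (fun n : ℕ => qPochInf (z * q ^ n) q) atTop (𝓝 1) := by
  simpa only [qPochInf_zero_left, Function.comp_def] using
    ((continuous_qPochInf hq).tendsto 0).comp (tendsto_mul_pow_zero hq z)

lemma qPochInf_mul_eq_of_recurrence {u v L : ℂ} {S : ℕ → ℂ} (hq : ‖q‖ < 1)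
    (hS : ∀ N, (1 - u * q ^ N) * S N = (1 - v * q ^ N) * S (N + 1))
    (hL : Tendsto S atTop (𝓝 L)) :
    qPochInf u q * S 0 = qPochInf v q * L := by
  have hfin : ∀ N, qPoch u q N * S 0 = qPoch v q N * S N := by
    intro N
    induction N with
    | zero => simp [qPoch]
    | succ N ih =>
      rw [qPoch_succ, qPoch_succ]
      linear_combination (1 - u * q ^ N) * ih + qPoch v q N * hS N
  refine tendsto_nhds_unique ((tendsto_qPoch hq u).mul_const (S 0)) ?_
  simpa only [hfin] using (tendsto_qPoch hq v).mul hL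

lemma mul_zpow_ne_one {a : ℂ} (ha : ∀ m : ℤ, a ≠ q ^ m) (n : ℤ) : a * q ^ n ≠ 1 := fun h =>
  ha (-n) (by rw [zpow_neg]; exact eq_inv_of_mul_eq_one_left h)

end QPochhammer

section QBinomial

variable {a q x : ℂ}

/-- The general term of the `q`-binomial series `₁φ₀(a; q, x)`. -/
noncomputable def qBinomialTerm (a q x : ℂ) (n : ℕ) : ℂ :=
  qPoch a q n / qPoch q q n * x ^ n

lemma qBinomialTerm_succ (hq : ‖q‖ < 1) (n : ℕ) :
    qBinomialTerm a q x (n + 1) * (1 - q ^ (n + 1)) =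
      x * (1 - a * q ^ n) * qBinomialTerm a q x n := by
  have hne := qPoch_ne_zero (mul_pow_ne_one hq.le hq)
  have hn := hne n
  have hn1 := hne (n + 1)
  rw [qPoch_succ, ← pow_succ'] at hn1
  have hfactor := right_ne_zero_of_mul hn1
  simp only [qBinomialTerm, qPoch_succ, ← pow_succ' q n, pow_succ x n]
  field_simp

lemma exists_norm_qBinomialTerm_le (hq : ‖q‖ < 1) (a : ℂ) :
    ∃ C, ∀ x n, ‖qBinomialTerm a q x n‖ ≤ C * ‖x‖ ^ n := by
  have hcoeff := (tendsto_qPoch hq a).div (tendsto_qPoch hq q)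
    (qPochInf_ne_zero_of_norm_lt_one hq hq)
  obtain ⟨C, hC⟩ := hcoeff.norm.bddAbove_range
  refine ⟨C, fun x n => ?_⟩
  rw [qBinomialTerm, norm_mul, norm_pow]
  gcongr
  exact hC ⟨n, rfl⟩

lemma summable_qBinomialTerm (hq : ‖q‖ < 1) (hx : ‖x‖ < 1) : Summable (qBinomialTerm a q x) := by
  obtain ⟨C, hC⟩ := exists_norm_qBinomialTerm_le hq a
  exact ((summable_geometric_of_lt_one (norm_nonneg x) hx).mul_left C).of_norm_bounded (hC x)

lemma one_sub_mul_tsum_qBinomialTerm (hq : ‖q‖ < 1) (hx : ‖x‖ < 1) :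
    (1 - x) * ∑' n, qBinomialTerm a q x n =
      (1 - a * x) * ∑' n, qBinomialTerm a q (x * q) n := by
  have hxq : ‖x * q‖ < 1 := by
    simpa using (norm_mul_pow_le hq.le x 1).trans_lt hx
  have hs := summable_qBinomialTerm (a := a) hq hx
  have hsq := summable_qBinomialTerm (a := a) hq hxq
  have hscale : ∀ n, qBinomialTerm a q (x * q) n = q ^ n * qBinomialTerm a q x n := fun n => by
    rw [qBinomialTerm, qBinomialTerm, mul_pow]
    ring
  have hdiff : ∑' n, (qBinomialTerm a q x n - qBinomialTerm a q (x * q) n) =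
      x * ∑' n, (qBinomialTerm a q x n - a * qBinomialTerm a q (x * q) n) := by
    rw [(hs.sub hsq).tsum_eq_zero_add, ← tsum_mul_left, hscale 0, pow_zero, one_mul, sub_self,
      zero_add]
    refine tsum_congr fun n => ?_
    rw [hscale, hscale]
    linear_combination qBinomialTerm_succ (a := a) (x := x) hq n
  rw [hs.tsum_sub hsq, hs.tsum_sub (hsq.mul_left a), tsum_mul_left] at hdiff
  linear_combination hdiff

theorem qPochInf_mul_tsum_qBinomialTerm (hq : ‖q‖ < 1) (hx : ‖x‖ < 1) :
    qPochInf x q * ∑' n, qBinomialTerm a q x n = qPochInf (a * x) q := by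
  have hle := norm_mul_pow_le hq.le x
  have hrec : ∀ N : ℕ, (1 - x * q ^ N) * ∑' n, qBinomialTerm a q (x * q ^ N) n =
      (1 - a * x * q ^ N) * ∑' n, qBinomialTerm a q (x * q ^ (N + 1)) n := fun N => by
    simpa only [mul_assoc, ← pow_succ] using
      one_sub_mul_tsum_qBinomialTerm (a := a) hq ((hle N).trans_lt hx)
  have hlim : Tendsto (fun N : ℕ => ∑' n, qBinomialTerm a q (x * q ^ N) n) atTop
      (𝓝 (∑' n, qBinomialTerm a q 0 n)) := by
    obtain ⟨C, hC⟩ := exists_norm_qBinomialTerm_le hq a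
    have hC0 : 0 ≤ C := (norm_nonneg _).trans (by simpa using hC 0 0)
    refine tendsto_tsum_of_dominated_convergence
      ((summable_geometric_of_lt_one (norm_nonneg x) hx).mul_left C)
      (fun n => ((tendsto_mul_pow_zero hq x).pow n).const_mul _)
      (Eventually.of_forall fun N n => (hC _ n).trans ?_)
    gcongr
    exact hle N
  have hzero : ∑' n, qBinomialTerm a q 0 n = 1 := by
    rw [tsum_eq_single 0 fun n hn => by simp [qBinomialTerm, hn]]
    simp [qBinomialTerm, qPoch]
  simpa [hzero] using qPochInf_mul_eq_of_recurrence hq hrec hlim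

end QBinomial

section Theta

/-- The modified Jacobi theta function `θ(z; q) = (z;q)_∞ (q/z;q)_∞`, used for `z ≠ 0`. -/
noncomputable def qTheta (z q : ℂ) : ℂ :=
  qPochInf z q * qPochInf (q / z) q

lemma qTheta_eq_neg_mul {q z : ℂ} (hq0 : q ≠ 0) (hq : ‖q‖ < 1) (hz : z ≠ 0) :
    qTheta z q = -z * qTheta (z * q) q := by
  have hcancel : q / (z * q) = z⁻¹ := by field_simp
  rw [qTheta, qTheta, hcancel, qPochInf_eq_one_sub_mul hq z, qPochInf_eq_one_sub_mul hq z⁻¹,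
    inv_mul_eq_div]
  field_simp
  ring

lemma qTheta_ne_zero {a q : ℂ} (hq0 : q ≠ 0) (hq : ‖q‖ < 1) (ha : ∀ m : ℤ, a ≠ q ^ m) :
    qTheta a q ≠ 0 := by
  refine mul_ne_zero (qPochInf_ne_zero hq fun i => by simpa using mul_zpow_ne_one ha i)
    (qPochInf_ne_zero hq fun i hi => ha (i + 1) ?_)
  rw [div_mul_eq_mul_div] at hi
  rw [zpow_add_one₀ hq0, zpow_natCast, mul_comm]
  exact (eq_of_div_eq_one hi).symm

end Theta

section BilateralSeries

variable {a b q x : ℂ}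

/-- The general term of `₁ψ₁(a; b; q, x)` multiplied by `(b;q)_∞ / (a;q)_∞`. With this normalisation
the term depends continuously on `b`, without exceptional values. -/
noncomputable def psiTerm (a b q x : ℂ) (n : ℤ) : ℂ :=
  qPochInf (b * q ^ n) q / qPochInf (a * q ^ n) q * x ^ n

lemma ne_zero_of_norm_lt_norm_mul (hbx : ‖b‖ < ‖a * x‖) : a ≠ 0 ∧ x ≠ 0 :=
  mul_ne_zero_iff.mp (norm_pos_iff.mp ((norm_nonneg b).trans_lt hbx))

lemma psiTerm_neg_natCast (hq0 : q ≠ 0) (hq : ‖q‖ < 1) (hx0 : x ≠ 0) (k : ℕ) :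
    psiTerm a b q x (-k) = qPochInf b q / qPochInf a q *
      ∏ j ∈ Finset.range k, (q ^ (j + 1) - b) / ((q ^ (j + 1) - a) * x) := by
  have hstep : ∀ (c : ℂ) (k : ℕ), qPochInf (c * q ^ (-(k + 1 : ℕ) : ℤ)) q =
      (q ^ (k + 1) - c) / q ^ (k + 1) * qPochInf (c * q ^ (-k : ℤ)) q := by
    intro c k
    have hindex : (-(k + 1 : ℕ) : ℤ) + 1 = -k := by push_cast; ring
    rw [qPochInf_eq_one_sub_mul hq, mul_assoc c, ← zpow_add_one₀ hq0, hindex, zpow_neg,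
      zpow_natCast]
    congr 1
    field_simp
  induction k with
  | zero => simp [psiTerm]
  | succ k ih =>
    rw [Finset.prod_range_succ, ← mul_assoc, ← ih, psiTerm, psiTerm, hstep, hstep, mul_div_mul_comm,
      div_div_div_cancel_right₀ (pow_ne_zero _ hq0)]
    simp only [zpow_neg, zpow_natCast, pow_succ x]
    field_simp

lemma exists_summable_bound_psiTerm_natCast (hq : ‖q‖ < 1) (hx : ‖x‖ < 1) (a : ℂ) (r : ℝ) :
    ∃ G : ℕ → ℝ, Summable G ∧ ∀ c, ‖c‖ ≤ r → ∀ n : ℕ, ‖psiTerm a c q x n‖ ≤ G n := by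
  obtain ⟨M, hM⟩ := (isCompact_closedBall (0 : ℂ) r).exists_bound_of_continuousOn
    (continuous_qPochInf hq).continuousOn
  obtain ⟨K, hK⟩ := ((tendsto_qPochInf_mul_pow hq a).inv₀ one_ne_zero).norm.bddAbove_range
  refine ⟨fun n => M * K * ‖x‖ ^ n,
    (summable_geometric_of_lt_one (norm_nonneg x) hx).mul_left (M * K), fun c hc n => ?_⟩
  have hnum : ‖qPochInf (c * q ^ n) q‖ ≤ M :=
    hM _ (mem_closedBall_zero_iff.mpr ((norm_mul_pow_le hq.le c n).trans hc))
  have hden : ‖(qPochInf (a * q ^ n) q)⁻¹‖ ≤ K := hK ⟨n, rfl⟩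
  have hM0 : 0 ≤ M := (norm_nonneg _).trans hnum
  rw [psiTerm, zpow_natCast, zpow_natCast, norm_mul, norm_pow, div_eq_mul_inv, norm_mul]
  beta_reduce
  gcongr

lemma exists_summable_bound_psiTerm_neg_natCast {r : ℝ} (hq0 : q ≠ 0) (hq : ‖q‖ < 1) (hr : 0 ≤ r)
    (hrx : r < ‖a * x‖) :
    ∃ G : ℕ → ℝ, Summable G ∧ ∀ c, ‖c‖ ≤ r → ∀ k : ℕ, ‖psiTerm a c q x (-k)‖ ≤ G k := by
  have hax : 0 < ‖a * x‖ := hr.trans_lt hrx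
  obtain ⟨M, hM⟩ := (isCompact_closedBall (0 : ℂ) r).exists_bound_of_continuousOn
    (continuous_qPochInf hq).continuousOn
  have hratio : Tendsto (fun j : ℕ => (‖q ^ (j + 1)‖ + r) / ‖(q ^ (j + 1) - a) * x‖) atTop
      (𝓝 (r / ‖a * x‖)) := by
    have hpow : Tendsto (fun j : ℕ => q ^ (j + 1)) atTop (𝓝 0) :=
      (tendsto_add_atTop_iff_nat 1).mpr (tendsto_pow_atTop_nhds_zero_of_norm_lt_one hq)
    simpa [Pi.div_def] using (hpow.norm.add_const r).div ((hpow.sub_const a).mul_const x).norm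
      (by simpa using norm_pos_iff.mp hax)
  have hlt : |r / ‖a * x‖| < 1 := by
    rwa [abs_of_nonneg (by positivity), div_lt_one hax]
  refine ⟨_, (summable_prod_range_of_tendsto hratio hlt).mul_left (M / ‖qPochInf a q‖),
    fun c hc k => ?_⟩
  have hnum : ‖qPochInf c q‖ ≤ M := hM c (mem_closedBall_zero_iff.mpr hc)
  have hM0 : 0 ≤ M := (norm_nonneg _).trans hnum
  have hx0 : x ≠ 0 := right_ne_zero_of_mul (norm_pos_iff.mp hax)
  rw [psiTerm_neg_natCast hq0 hq hx0, norm_mul, norm_div, norm_prod]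
  gcongr with j
  rw [norm_div]
  gcongr
  exact (norm_sub_le _ _).trans (by gcongr)

lemma exists_summable_bound_psiTerm (hq0 : q ≠ 0) (hq : ‖q‖ < 1) (hx : ‖x‖ < 1)
    (hbx : ‖b‖ < ‖a * x‖) :
    ∃ G : ℤ → ℝ, Summable G ∧ ∀ c, ‖c‖ ≤ ‖b‖ → ∀ n, ‖psiTerm a c q x n‖ ≤ G n := by
  obtain ⟨P, hP, hP_le⟩ := exists_summable_bound_psiTerm_natCast hq hx a ‖b‖
  obtain ⟨N, hN, hN_le⟩ := exists_summable_bound_psiTerm_neg_natCast hq0 hq (norm_nonneg b) hbx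
  refine ⟨_, hP.int_rec ((summable_nat_add_iff 1).mpr hN), fun c hc n => ?_⟩
  rcases n with n | k
  · exact hP_le c hc n
  · exact hN_le c hc (k + 1)

lemma summable_psiTerm (hq0 : q ≠ 0) (hq : ‖q‖ < 1) (hx : ‖x‖ < 1) (hbx : ‖b‖ < ‖a * x‖) :
    Summable (psiTerm a b q x) := by
  obtain ⟨G, hG, hle⟩ := exists_summable_bound_psiTerm hq0 hq hx hbx
  exact hG.of_norm_bounded (hle b le_rfl)

lemma tendsto_tsum_psiTerm_mul_pow (hq0 : q ≠ 0) (hq : ‖q‖ < 1) (hx : ‖x‖ < 1)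
    (hbx : ‖b‖ < ‖a * x‖) :
    Tendsto (fun N : ℕ => ∑' n, psiTerm a (b * q ^ N) q x n) atTop
      (𝓝 (∑' n, psiTerm a 0 q x n)) := by
  obtain ⟨G, hG, hle⟩ := exists_summable_bound_psiTerm hq0 hq hx hbx
  refine tendsto_tsum_of_dominated_convergence hG (fun n => ?_)
    (Eventually.of_forall fun N => hle _ (norm_mul_pow_le hq.le b N))
  have hcont : Continuous fun c => psiTerm a c q x n :=
    (((continuous_qPochInf hq).comp (continuous_mul_const (q ^ n))).div_const _).mul_const _
  exact (hcont.tendsto 0).comp (tendsto_mul_pow_zero hq b)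

lemma psiTerm_contiguous (hq0 : q ≠ 0) (hq : ‖q‖ < 1) (hx0 : x ≠ 0) (ha : ∀ m : ℤ, a ≠ q ^ m)
    (n : ℤ) :
    a * x * psiTerm a b q x n - b * psiTerm a b q x (n + 1) =
      (a - b) * x * psiTerm a (b * q) q x n := by
  have hfactor : 1 - a * q ^ n ≠ 0 := sub_ne_zero.mpr (mul_zpow_ne_one ha n).symm
  have hstep : ∀ c : ℂ, qPochInf (c * q ^ n) q = (1 - c * q ^ n) * qPochInf (c * q ^ (n + 1)) q :=
    fun c => by rw [qPochInf_eq_one_sub_mul hq, mul_assoc c, zpow_add_one₀ hq0]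
  have hmul : b * q * q ^ n = b * q ^ (n + 1) := by rw [zpow_add_one₀ hq0]; ring
  rw [psiTerm, psiTerm, psiTerm, hmul, hstep a, hstep b, zpow_add_one₀ hx0, ← div_div]
  field_simp
  ring

lemma one_sub_mul_tsum_psiTerm (hq0 : q ≠ 0) (hq : ‖q‖ < 1) (hx : ‖x‖ < 1)
    (hbx : ‖b‖ < ‖a * x‖) (ha : ∀ m : ℤ, a ≠ q ^ m) :
    (1 - b / (a * x)) * ∑' n, psiTerm a b q x n =
      (1 - b / a) * ∑' n, psiTerm a (b * q) q x n := by
  obtain ⟨ha0, hx0⟩ := ne_zero_of_norm_lt_norm_mul hbx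
  have hs := summable_psiTerm hq0 hq hx hbx
  have hshift : Summable fun n => psiTerm a b q x (n + 1) :=
    hs.comp_injective (add_left_injective 1)
  have htsum : ∑' n, psiTerm a b q x (n + 1) = ∑' n, psiTerm a b q x n :=
    (Equiv.addRight (1 : ℤ)).tsum_eq (psiTerm a b q x)
  have hsum : a * x * (∑' n, psiTerm a b q x n) - b * ∑' n, psiTerm a b q x n =
      (a - b) * x * ∑' n, psiTerm a (b * q) q x n := by
    rw [← tsum_mul_left (a := (a - b) * x),
      ← tsum_congr (psiTerm_contiguous hq0 hq hx0 ha),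
      (hs.mul_left (a * x)).tsum_sub (hshift.mul_left b), tsum_mul_left, tsum_mul_left, htsum]
  rw [one_sub_div (mul_ne_zero ha0 hx0), one_sub_div ha0, ← mul_div_mul_right (a - b) a hx0,
    div_mul_eq_mul_div, div_mul_eq_mul_div, sub_mul, hsum]

lemma qPochInf_mul_tsum_psiTerm (hq0 : q ≠ 0) (hq : ‖q‖ < 1) (hx : ‖x‖ < 1)
    (hbx : ‖b‖ < ‖a * x‖) (ha : ∀ m : ℤ, a ≠ q ^ m) :
    qPochInf (b / (a * x)) q * ∑' n, psiTerm a b q x n =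
      qPochInf (b / a) q * ∑' n, psiTerm a 0 q x n := by
  have hrec : ∀ N : ℕ, (1 - b / (a * x) * q ^ N) * ∑' n, psiTerm a (b * q ^ N) q x n =
      (1 - b / a * q ^ N) * ∑' n, psiTerm a (b * q ^ (N + 1)) q x n := fun N => by
    simpa only [div_mul_eq_mul_div, mul_assoc, ← pow_succ] using
      one_sub_mul_tsum_psiTerm hq0 hq hx ((norm_mul_pow_le hq.le b N).trans_lt hbx) ha
  simpa using qPochInf_mul_eq_of_recurrence hq hrec (tendsto_tsum_psiTerm_mul_pow hq0 hq hx hbx)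

lemma psiTerm_q_natCast (hq : ‖q‖ < 1) (ha : ∀ m : ℤ, a ≠ q ^ m) (n : ℕ) :
    psiTerm a q q x n = qPochInf q q / qPochInf a q * qBinomialTerm a q x n := by
  have hq_ne := qPoch_ne_zero (mul_pow_ne_one hq.le hq) n
  have ha_ne := qPoch_ne_zero (fun i => by simpa using mul_zpow_ne_one ha i) n
  rw [psiTerm, qBinomialTerm, qPochInf_eq_qPoch_mul hq q n, qPochInf_eq_qPoch_mul hq a n]
  simp only [zpow_natCast]
  field_simp

lemma psiTerm_q_neg_natCast_succ (hq0 : q ≠ 0) (hq : ‖q‖ < 1) (hx0 : x ≠ 0) (k : ℕ) :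
    psiTerm a q q x (-(k + 1 : ℕ)) = 0 := by
  rw [psiTerm_neg_natCast hq0 hq hx0, Finset.prod_range_succ']
  simp

lemma qPochInf_mul_tsum_psiTerm_q (hq0 : q ≠ 0) (hq : ‖q‖ < 1) (hx0 : x ≠ 0) (hx : ‖x‖ < 1)
    (ha : ∀ m : ℤ, a ≠ q ^ m) :
    qPochInf x q * ∑' n, psiTerm a q q x n =
      qPochInf q q / qPochInf a q * qPochInf (a * x) q := by
  have hsupp : Function.support (psiTerm a q q x) ⊆ Set.range ((↑) : ℕ → ℤ) := by
    rintro (n | k) hn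
    · exact ⟨n, rfl⟩
    · exact absurd (psiTerm_q_neg_natCast_succ hq0 hq hx0 k) hn
  rw [← Nat.cast_injective.tsum_eq hsupp, tsum_congr (psiTerm_q_natCast hq ha), tsum_mul_left,
    mul_left_comm, qPochInf_mul_tsum_qBinomialTerm hq hx]

lemma tsum_psiTerm_zero_of_norm_q_lt (hq0 : q ≠ 0) (hq : ‖q‖ < 1) (hx : ‖x‖ < 1)
    (hqx : ‖q‖ < ‖a * x‖) (ha : ∀ m : ℤ, a ≠ q ^ m) :
    qPochInf x q * qTheta a q * ∑' n, psiTerm a 0 q x n = qPochInf q q * qTheta (a * x) q := by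
  have ha_inf : qPochInf a q ≠ 0 := left_ne_zero_of_mul (qTheta_ne_zero hq0 hq ha)
  have hreduce := qPochInf_mul_tsum_psiTerm hq0 hq hx hqx ha
  have hbinom := qPochInf_mul_tsum_psiTerm_q hq0 hq (ne_zero_of_norm_lt_norm_mul hqx).2 hx ha
  field_simp at hbinom
  rw [qTheta, qTheta]
  linear_combination -(qPochInf x q * qPochInf a q) * hreduce + qPochInf (q / (a * x)) q * hbinom

lemma tsum_psiTerm_eq_mul_tsum (hq0 : q ≠ 0) (hx0 : x ≠ 0) :
    ∑' n, psiTerm a b q x n = x * ∑' n, psiTerm (a * q) (b * q) q x n := by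
  rw [← (Equiv.addRight (1 : ℤ)).tsum_eq, ← tsum_mul_left]
  refine tsum_congr fun n => ?_
  rw [Equiv.coe_addRight, psiTerm, psiTerm, zpow_add_one₀ hq0, zpow_add_one₀ hx0, mul_assoc a q,
    mul_assoc b q, mul_comm q]
  ring

lemma tsum_psiTerm_zero_mul_q (hq0 : q ≠ 0) (hq : ‖q‖ < 1) (ha0 : a ≠ 0) (hx0 : x ≠ 0)
    (h : qPochInf x q * qTheta a q * ∑' n, psiTerm a 0 q x n =
      qPochInf q q * qTheta (a * x) q) :
    qPochInf x q * qTheta (a * q) q * ∑' n, psiTerm (a * q) 0 q x n =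
      qPochInf q q * qTheta (a * q * x) q := by
  rw [tsum_psiTerm_eq_mul_tsum hq0 hx0, zero_mul, qTheta_eq_neg_mul hq0 hq ha0,
    qTheta_eq_neg_mul hq0 hq (mul_ne_zero ha0 hx0), mul_right_comm a x q] at h
  refine mul_left_cancel₀ (mul_ne_zero ha0 hx0) ?_
  linear_combination -h

theorem tsum_psiTerm_zero (hq0 : q ≠ 0) (hq : ‖q‖ < 1) (ha0 : a ≠ 0) (hx0 : x ≠ 0)
    (hx : ‖x‖ < 1) (ha : ∀ m : ℤ, a ≠ q ^ m) :
    qPochInf x q * qTheta a q * ∑' n, psiTerm a 0 q x n = qPochInf q q * qTheta (a * x) q := by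
  obtain ⟨k, hk⟩ : ∃ k : ℕ, ‖q‖ ^ k < ‖a * x‖ / ‖q‖ :=
    exists_pow_lt_of_lt_one
      (div_pos (norm_pos_iff.mpr (mul_ne_zero ha0 hx0)) (norm_pos_iff.mpr hq0)) hq
  rw [lt_div_iff₀ (norm_pos_iff.mpr hq0), mul_comm] at hk
  induction k generalizing a with
  | zero => exact tsum_psiTerm_zero_of_norm_q_lt hq0 hq hx (by simpa using hk) ha
  | succ k ih =>
    have hdiv : ∀ m : ℤ, a / q ≠ q ^ m := fun m h =>
      ha (m + 1) (by rw [zpow_add_one₀ hq0, ← h, div_mul_cancel₀ _ hq0])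
    have hnorm : ‖q‖ * ‖q‖ ^ k < ‖a / q * x‖ := by
      rwa [div_mul_eq_mul_div, norm_div, lt_div_iff₀ (norm_pos_iff.mpr hq0), mul_assoc, ← pow_succ]
    have ha0q := div_ne_zero ha0 hq0
    simpa only [div_mul_cancel₀ a hq0] using
      tsum_psiTerm_zero_mul_q hq0 hq ha0q hx0 (ih ha0q hdiv hnorm)

theorem hasSum_psiTerm (hq0 : q ≠ 0) (hq : ‖q‖ < 1) (hx : ‖x‖ < 1)
    (hbx : ‖b‖ < ‖a * x‖) (ha : ∀ m : ℤ, a ≠ q ^ m) :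
    HasSum (psiTerm a b q x)
      (qPochInf q q * qPochInf (b / a) q * qTheta (a * x) q /
        (qTheta a q * qPochInf x q * qPochInf (b / (a * x)) q)) := by
  obtain ⟨ha0, hx0⟩ := ne_zero_of_norm_lt_norm_mul hbx
  have hθ := qTheta_ne_zero hq0 hq ha
  have hx_inf := qPochInf_ne_zero_of_norm_lt_one hq hx
  have hb_inf : qPochInf (b / (a * x)) q ≠ 0 := qPochInf_ne_zero_of_norm_lt_one hq <| by
    rwa [norm_div, div_lt_one ((norm_nonneg b).trans_lt hbx)]
  refine (summable_psiTerm hq0 hq hx hbx).hasSum_iff.mpr ?_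
  rw [eq_div_iff (mul_ne_zero (mul_ne_zero hθ hx_inf) hb_inf)]
  linear_combination qTheta a q * qPochInf x q * qPochInf_mul_tsum_psiTerm hq0 hq hx hbx ha +
    qPochInf (b / a) q * tsum_psiTerm_zero hq0 hq ha0 hx0 hx ha

theorem ramanujan_1psi1_general (hq0 : q ≠ 0) (hq : ‖q‖ < 1) (hbx : ‖b / a‖ < ‖x‖) (hx : ‖x‖ < 1)
    (ha0 : a ≠ 0) (ha : ∀ m : ℤ, a ≠ q ^ m) :
    HasSum (fun n : ℤ => qPochInt a q n * qPochInf (b * q ^ n) q * x ^ n)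
      (qPochInf q q * qPochInf (b / a) q * qPochInf (a * x) q * qPochInf (q / (a * x)) q /
        (qPochInf (q / a) q * qPochInf x q * qPochInf (b / (a * x)) q)) := by
  have hbax : ‖b‖ < ‖a * x‖ := by
    rwa [norm_mul, ← div_lt_iff₀' (norm_pos_iff.mpr ha0), ← norm_div]
  have ha_inf : qPochInf a q ≠ 0 := left_ne_zero_of_mul (qTheta_ne_zero hq0 hq ha)
  have hterm : ∀ n, qPochInf a q * psiTerm a b q x n =
      qPochInt a q n * qPochInf (b * q ^ n) q * x ^ n := fun n => by
    rw [qPochInt, psiTerm]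
    ring
  have hψ := (hasSum_psiTerm hq0 hq hx hbax ha).mul_left (qPochInf a q)
  have hvalue : qPochInf a q * (qPochInf q q * qPochInf (b / a) q * qTheta (a * x) q /
        (qTheta a q * qPochInf x q * qPochInf (b / (a * x)) q)) =
      qPochInf q q * qPochInf (b / a) q * qPochInf (a * x) q * qPochInf (q / (a * x)) q /
        (qPochInf (q / a) q * qPochInf x q * qPochInf (b / (a * x)) q) := by
    rw [qTheta, qTheta]
    field_simp
  simpa only [hterm, hvalue] using hψ

lemma qPochInt_mul_qPochInf_div (n : ℤ) :
    qPochInt a q n * qPochInf (b * q ^ n) q * x ^ n / qPochInf b q =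
      qPochInt a q n / qPochInt b q n * x ^ n := by
  rw [qPochInt, qPochInt, div_div_eq_mul_div _ (qPochInf b q)]
  ring

end BilateralSeries

/-- Ramanujan's `₁ψ₁` summation formula. -/
theorem ramanujan_1psi1 (q a b x : ℂ)
    (hq0 : 0 < ‖q‖) (hq1 : ‖q‖ < 1)
    (hx1 : ‖b / a‖ < ‖x‖) (hx2 : ‖x‖ < 1)
    (ha0 : a ≠ 0) (hx0 : x ≠ 0)
    (ham : ∀ m : ℤ, a ≠ q ^ m) (hbm : ∀ m : ℤ, b ≠ q ^ m) :
    Summable (fun n : ℤ => (qPochInt a q n / qPochInt b q n) * x ^ n) ∧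
    ∑' n : ℤ, (qPochInt a q n / qPochInt b q n) * x ^ n
    = qPochInf q q * qPochInf (b / a) q * qPochInf (a * x) q * qPochInf (q / (a * x)) q /
      (qPochInf b q * qPochInf (q / a) q * qPochInf x q * qPochInf (b / (a * x)) q) := by
  have h := (ramanujan_1psi1_general (norm_pos_iff.mp hq0) hq1 hx1 hx2 ha0 ham).div_const
    (qPochInf b q)
  simp only [qPochInt_mul_qPochInf_div, div_div, mul_comm _ (qPochInf b q), ← mul_assoc] at h
  exact ⟨h.summable, h.tsum_eq⟩
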